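/- Let ℓ ≥ 1, let r₁ ≥ 2 and r₂, …, r_ℓ be positive integers, and let G be a finite graph such that t_{K(s,r₂,…,r_ℓ)}(G) > 0 for all 0 ≤ s ≤ r₁. Then the sequence s ↦ t_{K(s,r₂,…,r_ℓ)}(G) is log-convex in the sense that the ratios t_{K(s,r₂,…,r_ℓ)}(G) / t_{K(s−1,r₂,…,r_ℓ)}(G) are non-decreasing in s; in particular t_{K(r₁,r₂,…,r_ℓ)}(G) / t_{K(r₁−1,r₂,…,r_ℓ)}(G) ≥ t_{K(1,r₂,…,r_ℓ)}(G) / t_{K(r₂,…,r_ℓ)}(G). -/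

import Mathlib

open MeasureTheory

/-- The homomorphism density `t_H(G)`. -/
noncomputable def homDensity {α β : Type*} [Fintype α] [Fintype β]
    (H : SimpleGraph α) (G : SimpleGraph β) : ℝ :=
  (Nat.card (H →g G) : ℝ) / (Fintype.card β : ℝ) ^ (Fintype.card α)

/-- The number of edges of a graph. -/
noncomputable def edgeCount {α : Type*} (H : SimpleGraph α) : ℕ :=
  Nat.card H.edgeSet

/-- `G` is `(ρ,d)`-dense: every vertex subset `X` with `|X| ≥ ρ|V(G)|`
spans at least `(d/2)|X|²` edges. -/
def LocallyDense {β : Type*} [Fintype β] (G : SimpleGraph β) (ρ d : ℝ) : Prop :=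
  ∀ X : Finset β, ρ * (Fintype.card β : ℝ) ≤ (X.card : ℝ) →
    d / 2 * (X.card : ℝ) ^ 2 ≤
      (Nat.card {e : Sym2 β // e ∈ G.edgeSet ∧ ∀ v ∈ e, v ∈ X} : ℝ)

/-- The homomorphism density of the complete multipartite graph `K(s, r₂, …, r_ℓ)`,
where the first part size of `r` is replaced by `s`. -/
noncomputable def multiSliceDensity {β : Type*} [Fintype β] (G : SimpleGraph β)
    {ℓ : ℕ} (hℓ : 0 < ℓ) (r : Fin ℓ → ℕ) (s : ℕ) : ℝ :=
  homDensity
    (SimpleGraph.completeMultipartiteGraph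
      (fun i : Fin ℓ => Fin (Function.update r ⟨0, hℓ⟩ s i))) G

/-!
Let `H = K(r₂, …, r_ℓ)`. A homomorphism from `K(s, r₂, …, r_ℓ)` to `G` consists of a homomorphism
`f` from `H` to `G` and `s` independent choices of a common neighbour of the image of `f`. Hence, up
to a factor independent of `s`, its density is the `s`-th moment of the proportion of vertices of
`G` that are common neighbours of the image of a random `f`, and the moments of a nonnegative random
variable form a log-convex sequence by the Cauchy–Schwarz inequality. The same argument applies to
any graph `H` and any subset of its vertices to which `s` new vertices are attached.
-/

section Moments

variable {ι R : Type*} [Field R] [LinearOrder R] [IsStrictOrderedRing R]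
  {I : Finset ι} {w x : ι → R}

lemma sq_sum_mul_pow_succ_le (hw : ∀ i ∈ I, 0 ≤ w i) (hx : ∀ i ∈ I, 0 ≤ x i) (n : ℕ) :
    (∑ i ∈ I, w i * x i ^ (n + 1)) ^ 2 ≤
      (∑ i ∈ I, w i * x i ^ n) * ∑ i ∈ I, w i * x i ^ (n + 2) :=
  Finset.sum_sq_le_sum_mul_sum_of_sq_le_mul I
    (fun i hi ↦ mul_nonneg (hw i hi) (pow_nonneg (hx i hi) _))
    (fun i hi ↦ mul_nonneg (hw i hi) (pow_nonneg (hx i hi) _))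
    (fun i _ ↦ le_of_eq (by ring))

lemma sum_mul_pow_pos_of_sum_mul_pos (hw : ∀ i ∈ I, 0 ≤ w i) (hx : ∀ i ∈ I, 0 ≤ x i)
    (hpos : 0 < ∑ i ∈ I, w i * x i) (n : ℕ) : 0 < ∑ i ∈ I, w i * x i ^ n := by
  obtain ⟨i, hi, hwx⟩ : ∃ i ∈ I, 0 < w i * x i :=
    Finset.exists_lt_of_sum_lt (by simpa only [Finset.sum_const_zero] using hpos)
  have hwi : 0 < w i := pos_of_mul_pos_left hwx (hx i hi)
  have hxi : 0 < x i := pos_of_mul_pos_right hwx (hw i hi)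
  exact Finset.sum_pos' (fun j hj ↦ mul_nonneg (hw j hj) (pow_nonneg (hx j hj) n))
    ⟨i, hi, mul_pos hwi (pow_pos hxi n)⟩

lemma monotone_sum_mul_pow_succ_div (hw : ∀ i ∈ I, 0 ≤ w i) (hx : ∀ i ∈ I, 0 ≤ x i)
    (hpos : 0 < ∑ i ∈ I, w i * x i) :
    Monotone fun n : ℕ ↦ (∑ i ∈ I, w i * x i ^ (n + 1)) / ∑ i ∈ I, w i * x i ^ n := by
  have moment_pos := sum_mul_pow_pos_of_sum_mul_pos hw hx hpos
  refine monotone_nat_of_le_succ fun n ↦ ?_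
  rw [div_le_div_iff₀ (moment_pos n) (moment_pos (n + 1)), ← sq, mul_comm]
  exact sq_sum_mul_pow_succ_le hw hx n

end Moments

section AddTwins

variable {α β : Type*}

/-- The graph obtained from `H` by adding an independent set `W` of new vertices (the right summand
of `α ⊕ W`), each with neighbourhood `A ⊆ V(H)`. The join of `H` with an independent set is the case
`A = Set.univ`. It plays the role of a complete multipartite graph in which one part, `W`, varies
in size. -/
def addTwins (H : SimpleGraph α) (A : Set α) (W : Type*) : SimpleGraph (α ⊕ W) where
  Adj
    | .inl a, .inl b => H.Adj a b
    | .inl a, .inr _ | .inr _, .inl a => a ∈ A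
    | .inr _, .inr _ => False
  symm.symm
    | .inl _, .inl _ => H.adj_symm
    | .inl _, .inr _ | .inr _, .inl _ => id
    | .inr _, .inr _ => id
  loopless.irrefl
    | .inl a => H.loopless.irrefl a
    | .inr _ => id

/-- A homomorphism from `addTwins H A W` is a homomorphism `f` from `H` together with an arbitrary
map from `W` to the common neighbours of `f(A)`. -/
def addTwinsHomEquiv (H : SimpleGraph α) (A : Set α) (W : Type*) (G : SimpleGraph β) :
    (addTwins H A W →g G) ≃ Σ f : H →g G, W → ↥(⋂ a ∈ A, G.neighborSet (f a)) where
  toFun φ :=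
    ⟨⟨fun a ↦ φ (.inl a), fun {a b} h ↦ φ.map_adj (v := .inl a) (w := .inl b) h⟩,
      fun x ↦ ⟨φ (.inr x), Set.mem_iInter₂.mpr fun a ha ↦
        φ.map_adj (v := .inl a) (w := .inr x) ha⟩⟩
  invFun p :=
    { toFun := Sum.elim p.1 fun w ↦ p.2 w
      map_rel' := by
        rintro (a | v) (b | w) h
        · exact p.1.map_adj h
        · exact Set.mem_iInter₂.mp (p.2 w).2 a h
        · exact (Set.mem_iInter₂.mp (p.2 v).2 b h).symm
        · exact h.elim }
  left_inv φ := by ext (a | w) <;> rfl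
  right_inv _ := rfl

lemma card_addTwins_hom [Finite β] (H : SimpleGraph α) (A : Set α) (W : Type*) [Fintype W]
    (G : SimpleGraph β) [Fintype (H →g G)] :
    Nat.card (addTwins H A W →g G) =
      ∑ f : H →g G, (⋂ a ∈ A, G.neighborSet (f a)).ncard ^ Fintype.card W := by
  rw [Nat.card_congr (addTwinsHomEquiv H A W G), Nat.card_sigma]
  simp only [Nat.card_fun, Nat.card_coe_set_eq, Nat.card_eq_fintype_card]

variable [Fintype α] [Fintype β]

lemma homDensity_addTwins (H : SimpleGraph α) (A : Set α) (W : Type*) [Fintype W]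
    (G : SimpleGraph β) [Fintype (H →g G)] :
    homDensity (addTwins H A W) G =
      ∑ f : H →g G, ((Fintype.card β : ℝ) ^ Fintype.card α)⁻¹ *
        ((⋂ a ∈ A, G.neighborSet (f a)).ncard / (Fintype.card β : ℝ)) ^ Fintype.card W := by
  rw [homDensity, card_addTwins_hom, Fintype.card_sum, pow_add, Nat.cast_sum, Finset.sum_div]
  refine Finset.sum_congr rfl fun f _ ↦ ?_
  rw [Nat.cast_pow, div_pow, inv_mul_eq_div, div_div, mul_comm]

theorem stmt11_general (H : SimpleGraph α) (A : Set α) (G : SimpleGraph β)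
    (hpos : 0 < homDensity (addTwins H A (Fin 1)) G) :
    Monotone fun s : ℕ ↦
      homDensity (addTwins H A (Fin (s + 1))) G / homDensity (addTwins H A (Fin s)) G := by
  cases nonempty_fintype (H →g G)
  simp only [homDensity_addTwins, Fintype.card_fin, pow_one] at hpos ⊢
  exact monotone_sum_mul_pow_succ_div (fun _ _ ↦ by positivity) (fun _ _ ↦ by positivity) hpos

end AddTwins

section CompleteMultipartite

open SimpleGraph

lemma homDensity_congr {α α' β : Type*} [Fintype α] [Fintype α'] [Fintype β]
    {H : SimpleGraph α} {H' : SimpleGraph α'} (e : H ≃g H') (G : SimpleGraph β) :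
    homDensity H G = homDensity H' G := by
  rw [homDensity, homDensity, Nat.card_congr (e.homCongr .refl), e.card_eq]

variable {ι : Type*}

/-- The complete multipartite graph with parts `V i` arises from the one with parts `U i ≃ V i` for
`i ≠ i₀` by joining an independent set `W ≃ V i₀` to all vertices. Allowing equivalent parts avoids
casts between the types `Fin n` when part sizes are only propositionally equal. -/
noncomputable def addTwinsIsoCompleteMultipartiteGraph {V : ι → Type*} {i₀ : ι}
    {U : {i // i ≠ i₀} → Type*} {W : Type*} (eU : ∀ i, U i ≃ V i) (eW : W ≃ V i₀) :
    addTwins (completeMultipartiteGraph U) Set.univ W ≃g completeMultipartiteGraph V where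
  toEquiv := Equiv.ofBijective
    (Sum.elim (Sigma.map Subtype.val fun i ↦ eU i) fun x ↦ ⟨i₀, eW x⟩) <| by
    constructor
    · exact (Subtype.val_injective.sigma_map fun i ↦ (eU i).injective).sumElim
        (sigma_mk_injective.comp eW.injective) fun a _ h ↦ a.1.2 (congrArg Sigma.fst h)
    · rintro ⟨i, x⟩
      obtain rfl | hi := eq_or_ne i i₀
      · exact ⟨.inr (eW.symm x), congrArg (Sigma.mk i) (eW.apply_symm_apply x)⟩
      · exact ⟨.inl ⟨⟨i, hi⟩, (eU ⟨i, hi⟩).symm x⟩,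
          congrArg (Sigma.mk i) ((eU ⟨i, hi⟩).apply_symm_apply x)⟩
  map_rel_iff' := by
    rintro (⟨i, x⟩ | x) (⟨j, y⟩ | y)
    · exact not_congr Subtype.ext_iff.symm
    · exact iff_of_true i.2 trivial
    · exact iff_of_true j.2.symm trivial
    · exact iff_of_false (· rfl) id

lemma homDensity_completeMultipartiteGraph_update [Fintype ι] [DecidableEq ι] {β : Type*}
    [Fintype β] (G : SimpleGraph β) (r : ι → ℕ) (i₀ : ι) (s : ℕ) :
    homDensity (completeMultipartiteGraph fun i ↦ Fin (Function.update r i₀ s i)) G =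
      homDensity (addTwins (completeMultipartiteGraph fun i : {i // i ≠ i₀} ↦ Fin (r i))
        Set.univ (Fin s)) G :=
  .symm <| homDensity_congr (addTwinsIsoCompleteMultipartiteGraph
    (V := fun i ↦ Fin (Function.update r i₀ s i))
    (fun i ↦ finCongr (Function.update_of_ne i.2 s r).symm)
    (finCongr (Function.update_self i₀ s r).symm)) G

end CompleteMultipartite

theorem stmt11 {β : Type*} [Fintype β] (G : SimpleGraph β)
    (ℓ : ℕ) (hℓ : 0 < ℓ) (r : Fin ℓ → ℕ) (hr : ∀ i, 1 ≤ r i) (hr1 : 2 ≤ r ⟨0, hℓ⟩)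
    (hpos : ∀ s : ℕ, s ≤ r ⟨0, hℓ⟩ → 0 < multiSliceDensity G hℓ r s) :
    (∀ s : ℕ, 1 ≤ s → s < r ⟨0, hℓ⟩ →
      multiSliceDensity G hℓ r s / multiSliceDensity G hℓ r (s - 1) ≤
        multiSliceDensity G hℓ r (s + 1) / multiSliceDensity G hℓ r s) ∧
    multiSliceDensity G hℓ r (r ⟨0, hℓ⟩) / multiSliceDensity G hℓ r (r ⟨0, hℓ⟩ - 1) ≥
      multiSliceDensity G hℓ r 1 / multiSliceDensity G hℓ r 0 := by
  have hmono : Monotone fun s ↦ multiSliceDensity G hℓ r (s + 1) / multiSliceDensity G hℓ r s := by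
    simp only [multiSliceDensity, homDensity_completeMultipartiteGraph_update] at hpos ⊢
    exact stmt11_general _ _ G (hpos 1 (by lia))
  exact ⟨fun s hs _ ↦ by simpa only [Nat.sub_add_cancel hs] using hmono (Nat.sub_le s 1),
    by simpa only [Nat.sub_add_cancel (hr ⟨0, hℓ⟩)] using hmono (Nat.zero_le (r ⟨0, hℓ⟩ - 1))⟩
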